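/- For every integer w ≥ 4, with u = w−2 and v = w−1, the weighted sum formula 2·∑_{a+b+c=w, a,b,c≥1} 2^{b−1} ζ(ā,b̄,c) = 2·ζ(1̄,1̄,ū) + u·ζ(1̄,v̄) + 2·ζ(1̄,v) + ζ(2̄,ū) + ζ(2,ū) + ζ(w̄) holds. -/

import Mathlib

open Filter

/-- Depth-1 Euler sum `ζ(s; e) = ∑_{n ≥ 1} eⁿ / nˢ`,
defined as the limit of partial sums. `e = 1` gives `ζ(s)`, `e = -1` gives `ζ(s̄)`. -/
noncomputable def eulerSum1 (s : ℕ) (e : ℝ) : ℝ :=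
  limUnder atTop (fun N : ℕ =>
    ∑ n ∈ Finset.Icc 1 N, e ^ n / (n : ℝ) ^ s)

/-- Depth-2 Euler sum `ζ(s₁, s₂; e₁, e₂) = ∑_{n₁ > n₂ ≥ 1} e₁^{n₁} e₂^{n₂} / (n₁^{s₁} n₂^{s₂})`,
defined as the limit of iterated partial sums. A bar over an argument means the
corresponding sign is `-1`. -/
noncomputable def eulerSum2 (s₁ s₂ : ℕ) (e₁ e₂ : ℝ) : ℝ :=
  limUnder atTop (fun N : ℕ =>
    ∑ n₁ ∈ Finset.Icc 1 N, ∑ n₂ ∈ Finset.Ico 1 n₁,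
      e₁ ^ n₁ * e₂ ^ n₂ / ((n₁ : ℝ) ^ s₁ * (n₂ : ℝ) ^ s₂))

/-- Depth-3 Euler sum
`ζ(s₁, s₂, s₃; e₁, e₂, e₃) = ∑_{n₁ > n₂ > n₃ ≥ 1} e₁^{n₁} e₂^{n₂} e₃^{n₃} / (n₁^{s₁} n₂^{s₂} n₃^{s₃})`. -/
noncomputable def eulerSum3 (s₁ s₂ s₃ : ℕ) (e₁ e₂ e₃ : ℝ) : ℝ :=
  limUnder atTop (fun N : ℕ =>
    ∑ n₁ ∈ Finset.Icc 1 N, ∑ n₂ ∈ Finset.Ico 1 n₁, ∑ n₃ ∈ Finset.Ico 1 n₂,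
      e₁ ^ n₁ * e₂ ^ n₂ * e₃ ^ n₃ / ((n₁ : ℝ) ^ s₁ * (n₂ : ℝ) ^ s₂ * (n₃ : ℝ) ^ s₃))

/-- Depth-1 multiple T-value `T(s) = 2 ∑_{m odd, m ≥ 1} 1 / mˢ`. -/
noncomputable def tValue1 (s : ℕ) : ℝ :=
  limUnder atTop (fun N : ℕ =>
    ∑ m ∈ Finset.Icc 1 N, if m % 2 = 1 then 2 / (m : ℝ) ^ s else 0)

/-- Depth-2 multiple T-value
`T(s₁, s₂) = ∑_{m₁ > m₂ > 0, m₁ even, m₂ odd} 4 / (m₁^{s₁} m₂^{s₂})`. -/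
noncomputable def tValue2 (s₁ s₂ : ℕ) : ℝ :=
  limUnder atTop (fun N : ℕ =>
    ∑ m₁ ∈ Finset.Icc 1 N, ∑ m₂ ∈ Finset.Ico 1 m₁,
      if m₁ % 2 = 0 ∧ m₂ % 2 = 1 then 4 / ((m₁ : ℝ) ^ s₁ * (m₂ : ℝ) ^ s₂) else 0)

/-- Depth-3 multiple T-value
`T(s₁, s₂, s₃) = ∑_{m₁ > m₂ > m₃ > 0, m₁ odd, m₂ even, m₃ odd} 8 / (m₁^{s₁} m₂^{s₂} m₃^{s₃})`. -/
noncomputable def tValue3 (s₁ s₂ s₃ : ℕ) : ℝ :=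
  limUnder atTop (fun N : ℕ =>
    ∑ m₁ ∈ Finset.Icc 1 N, ∑ m₂ ∈ Finset.Ico 1 m₁, ∑ m₃ ∈ Finset.Ico 1 m₂,
      if m₁ % 2 = 1 ∧ m₂ % 2 = 0 ∧ m₃ % 2 = 1 then
        8 / ((m₁ : ℝ) ^ s₁ * (m₂ : ℝ) ^ s₂ * (m₃ : ℝ) ^ s₃) else 0)

/-- `∑_{j=1}^n e^j / j`. -/
noncomputable def signedHarmonic (e : ℝ) (n : ℕ) : ℝ :=
  ∑ j ∈ Finset.Icc 1 n, e ^ j / (j : ℝ)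

/-- The power series of `1 / (n - t X)`. -/
noncomputable def poleSeries (t : ℝ) (n : ℕ) : PowerSeries ℝ :=
  PowerSeries.mk fun k => t ^ k / (n : ℝ) ^ (k + 1)

/-- The coefficient of `x ^ k` in `1 / ((m - x) (n - x))`. -/
noncomputable def pairCoeff (k m n : ℕ) : ℝ :=
  PowerSeries.coeff k (poleSeries 1 m * poleSeries 1 n)

theorem poleSeries_mul_cancel (t : ℝ) {n : ℕ} (hn : n ≠ 0) :
    ((n : PowerSeries ℝ) - PowerSeries.C t * PowerSeries.X) * poleSeries t n = 1 := by
  have hn' : (n : ℝ) ≠ 0 := by exact_mod_cast hn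
  have hc : (n : PowerSeries ℝ) = PowerSeries.C (n : ℝ) := by simp
  ext k
  rw [sub_mul, hc, mul_assoc, map_sub, PowerSeries.coeff_C_mul, PowerSeries.coeff_C_mul]
  cases k with
  | zero => simp [poleSeries, hn']
  | succ k =>
    rw [mul_comm PowerSeries.X, PowerSeries.coeff_succ_mul_X]
    simp only [poleSeries, PowerSeries.coeff_mk, PowerSeries.coeff_one]
    simp
    field_simp
    ring

theorem poleSeries_mul_eq_two {m n : ℕ} (hm : m ≠ 0) (hn : n ≠ 0) :
    poleSeries 1 m * poleSeries 1 n =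
      poleSeries 2 (m + n) * (poleSeries 1 m + poleSeries 1 n) := by
  have h1 := poleSeries_mul_cancel 1 hm
  have h2 := poleSeries_mul_cancel 1 hn
  have h3 := poleSeries_mul_cancel 2 (n := m + n) (by omega)
  have hc : (PowerSeries.C (2 : ℝ)) = 2 := map_ofNat _ 2
  rw [hc] at h3
  push_cast at h3
  simp only [map_one, one_mul] at h1 h2
  linear_combination (-poleSeries 1 m * poleSeries 1 n) * h3
    + poleSeries 2 (m + n) * poleSeries 1 n * h1
    + poleSeries 2 (m + n) * poleSeries 1 m * h2

theorem poleSeries_sub {m n : ℕ} (hm : m ≠ 0) (hn : n ≠ 0) :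
    PowerSeries.C ((n : ℝ) - m) * (poleSeries 1 m * poleSeries 1 n) =
      poleSeries 1 m - poleSeries 1 n := by
  have h1 := poleSeries_mul_cancel 1 hm
  have h2 := poleSeries_mul_cancel 1 hn
  simp only [map_one, one_mul] at h1 h2
  simp only [map_sub, map_natCast]
  linear_combination poleSeries 1 m * h2 - poleSeries 1 n * h1

theorem pairCoeff_eq_sum (k m n : ℕ) : pairCoeff k m n =
    ∑ p ∈ Finset.HasAntidiagonal.antidiagonal k, 1 / (m : ℝ) ^ (p.1 + 1) * (1 / (n : ℝ) ^ (p.2 + 1)) := by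
  simp [pairCoeff, PowerSeries.coeff_mul, poleSeries]

theorem pairCoeff_self (k m : ℕ) :
    pairCoeff k m m = ((k : ℝ) + 1) / (m : ℝ) ^ (k + 2) := by
  rw [pairCoeff_eq_sum]
  have : ∀ p ∈ Finset.HasAntidiagonal.antidiagonal k,
      1 / (m : ℝ) ^ (p.1 + 1) * (1 / (m : ℝ) ^ (p.2 + 1)) = 1 / (m : ℝ) ^ (k + 2) := by
    intro p hp
    rw [Finset.HasAntidiagonal.mem_antidiagonal] at hp
    rw [← hp, div_mul_div_comm, ← pow_add, one_mul]
    congr 2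
    ring
  rw [Finset.sum_congr rfl this]
  simp
  ring

/-- Partial fractions; the convention `x / 0 = 0` makes the formula uniform. -/
theorem pairCoeff_partial_fractions (k : ℕ) {m n : ℕ} (hm : m ≠ 0) (hn : n ≠ 0) :
    pairCoeff k m n = (if n = m then pairCoeff k m m else 0)
      + (1 / (m : ℝ) ^ (k + 1) - 1 / (n : ℝ) ^ (k + 1)) / ((n : ℝ) - m) := by
  split_ifs with h
  · subst h; simp
  · have hne : (n : ℝ) - m ≠ 0 := sub_ne_zero.mpr (by exact_mod_cast h)
    have := congrArg (PowerSeries.coeff k) (poleSeries_sub hm hn)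
    rw [PowerSeries.coeff_C_mul, map_sub] at this
    rw [zero_add, eq_div_iff hne, mul_comm]
    simpa [pairCoeff, poleSeries] using this

theorem pairCoeff_nonneg (k m n : ℕ) : 0 ≤ pairCoeff k m n := by
  rw [pairCoeff_eq_sum]; positivity

theorem pairCoeff_anti (k m : ℕ) {n n' : ℕ} (hn : 1 ≤ n) (h : n ≤ n') :
    pairCoeff k m n' ≤ pairCoeff k m n := by
  rw [pairCoeff_eq_sum, pairCoeff_eq_sum]
  have : (0 : ℝ) < n := by exact_mod_cast hn
  gcongr

theorem one_div_pow_le_one_div {n s : ℕ} (hn : 1 ≤ n) (hs : 1 ≤ s) :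
    1 / (n : ℝ) ^ s ≤ 1 / (n : ℝ) := by
  have h1 : (1 : ℝ) ≤ n := by exact_mod_cast hn
  have := le_self_pow₀ h1 (n := s) (by omega)
  gcongr

theorem pairCoeff_le (k : ℕ) {m n : ℕ} (hm : 1 ≤ m) (hn : 1 ≤ n) :
    pairCoeff k m n ≤ ((k : ℝ) + 1) * (1 / (m : ℝ) * (1 / (n : ℝ))) := by
  rw [pairCoeff_eq_sum]
  calc _ ≤ ∑ p ∈ Finset.HasAntidiagonal.antidiagonal k, 1 / (m : ℝ) * (1 / (n : ℝ)) := by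
        refine Finset.sum_le_sum fun p _ => ?_
        exact mul_le_mul (one_div_pow_le_one_div hm (by omega))
          (one_div_pow_le_one_div hn (by omega)) (by positivity) (by positivity)
    _ = _ := by simp

/-- Sum over a block shifted by `N`, telescoped. -/
theorem sum_sub_shift (φ : ℕ → ℝ) {N M : ℕ} (h : N ≤ M) :
    ∑ n ∈ Finset.Icc 1 (M - N), (φ n - φ (N + n)) =
      ∑ n ∈ Finset.Icc 1 N, φ n - ∑ n ∈ Finset.Ioc (M - N) M, φ n := by
  obtain ⟨K, rfl⟩ := Nat.exists_eq_add_of_le h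
  rw [Nat.add_sub_cancel_left, Finset.sum_sub_distrib]
  have e1 : ∑ n ∈ Finset.Icc 1 K, φ (N + n) = ∑ n ∈ Finset.Ioc N (N + K), φ n := by
    refine Finset.sum_nbij' (fun n => N + n) (fun n => n - N) ?_ ?_ ?_ ?_ ?_ <;>
      intros <;> simp_all <;> omega
  have hI : ∀ L, Finset.Icc 1 L = Finset.Ioc 0 L := fun L => by ext; simp; omega
  have e2 := Finset.sum_Ioc_consecutive φ (Nat.zero_le N) (Nat.le_add_right N K)
  have e3 := Finset.sum_Ioc_consecutive φ (Nat.zero_le K) (Nat.le_add_left K N)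
  rw [e1, hI, hI]
  linarith

theorem sum_Ico_one_reflect (f : ℕ → ℝ) (n : ℕ) :
    ∑ j ∈ Finset.Ico 1 n, f (n - j) = ∑ j ∈ Finset.Ico 1 n, f j := by
  refine Finset.sum_nbij' (fun j => n - j) (fun j => n - j) ?_ ?_ ?_ ?_ ?_ <;>
    intros <;> simp_all <;> omega

theorem abs_alternating_sum_le_of_mono {d : ℕ → ℝ} {M : ℕ} (hd : ∀ n, 1 ≤ n → 0 ≤ d n)
    (hmono : ∀ n, 1 ≤ n → n < M → d n ≤ d (n + 1)) (s : ℕ) (hM : 1 ≤ M) :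
    |∑ n ∈ Finset.Ioc s M, (-1 : ℝ) ^ n * d n| ≤ d M := by
  rcases lt_or_ge M s with hs | hs
  · rw [Finset.Ioc_eq_empty (by omega)]; simpa using hd M hM
  rcases hs.eq_or_lt with rfl | hs
  · simpa using hd s hM
  have key : ∀ K, s + 1 ≤ K → K ≤ M →
      0 ≤ (-1 : ℝ) ^ K * ∑ n ∈ Finset.Ioc s K, (-1 : ℝ) ^ n * d n ∧
      (-1 : ℝ) ^ K * ∑ n ∈ Finset.Ioc s K, (-1 : ℝ) ^ n * d n ≤ d K := by
    intro K hK
    induction K, hK using Nat.le_induction with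
    | base =>
      intro _
      have := hd (s + 1) (by omega)
      simp [← mul_assoc, ← mul_pow, this]
    | succ K hK ih =>
      intro hKM
      obtain ⟨h1, h2⟩ := ih (by omega)
      have h3 := hmono K (by omega) (by omega)
      have h4 : ((-1 : ℝ) ^ (K + 1)) * (-1) ^ (K + 1) = 1 := by simp [← mul_pow]
      rw [Finset.sum_Ioc_succ_top (by omega), mul_add, ← mul_assoc, h4, pow_succ]
      constructor <;> linarith
  obtain ⟨h1, h2⟩ := key M (by omega) le_rfl
  have h5 : |(-1 : ℝ) ^ M * ∑ n ∈ Finset.Ioc s M, (-1 : ℝ) ^ n * d n| ≤ d M := by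
    rw [abs_of_nonneg h1]; exact h2
  simpa [abs_mul] using h5

theorem abs_alternating_sum_le_of_anti {d : ℕ → ℝ} (hd : ∀ n, 1 ≤ n → 0 ≤ d n)
    (hanti : ∀ n, 1 ≤ n → d (n + 1) ≤ d n) (s M : ℕ) :
    |∑ n ∈ Finset.Ioc s M, (-1 : ℝ) ^ n * d n| ≤ d (s + 1) := by
  have key : ∀ k s,
      0 ≤ (-1 : ℝ) ^ (s + 1) * ∑ n ∈ Finset.Ioc s (s + k), (-1 : ℝ) ^ n * d n ∧
      (-1 : ℝ) ^ (s + 1) * ∑ n ∈ Finset.Ioc s (s + k), (-1 : ℝ) ^ n * d n ≤ d (s + 1) := by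
    intro k
    induction k with
    | zero => intro s; simpa using hd (s + 1) (by omega)
    | succ k ih =>
      intro s
      obtain ⟨h1, h2⟩ := ih (s + 1)
      have h3 := hanti (s + 1) (by omega)
      have h4 : ((-1 : ℝ) ^ (s + 1)) * (-1) ^ (s + 1) = 1 := by simp [← mul_pow]
      rw [← Finset.sum_Ioc_consecutive _ (show s ≤ s + 1 by omega)
        (show s + 1 ≤ s + (k + 1) by omega), mul_add,
        show s + (k + 1) = s + 1 + k by ring]
      rw [pow_succ _ (s + 1)] at h1 h2
      simp only [Nat.Ioc_succ_singleton, Finset.sum_singleton]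
      rw [← mul_assoc, h4]
      constructor <;> linarith
  rcases lt_or_ge M s with hs | hs
  · rw [Finset.Ioc_eq_empty (by omega)]; simpa using hd (s + 1) (by omega)
  obtain ⟨k, rfl⟩ := Nat.exists_eq_add_of_le hs
  obtain ⟨h1, h2⟩ := key k s
  have h5 : |(-1 : ℝ) ^ (s + 1) * ∑ n ∈ Finset.Ioc s (s + k), (-1 : ℝ) ^ n * d n| ≤ d (s + 1) := by
    rw [abs_of_nonneg h1]; exact h2
  simpa [abs_mul] using h5

/-- The alternating sum of the averages of the last `N` values of an antitone function. -/
theorem abs_alternating_sum_tail_average_le {φ : ℕ → ℝ} (hφ : ∀ n, 0 ≤ φ n)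
    (hanti : ∀ n n', 1 ≤ n → n ≤ n' → φ n' ≤ φ n) (s : ℕ) {M : ℕ} (hM : 1 ≤ M) :
    |∑ N ∈ Finset.Ioc s M, (-1 : ℝ) ^ N * (1 / (N : ℝ) * ∑ n ∈ Finset.Ioc (M - N) M, φ n)| ≤
      1 / (M : ℝ) * ∑ n ∈ Finset.Icc 1 M, φ n := by
  have hI : Finset.Ioc (M - M) M = Finset.Icc 1 M := by ext; simp; omega
  rw [← hI]
  refine abs_alternating_sum_le_of_mono
    (d := fun N => 1 / (N : ℝ) * ∑ n ∈ Finset.Ioc (M - N) M, φ n)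
    (fun N _ => mul_nonneg (by positivity) (Finset.sum_nonneg fun n _ => hφ n)) ?_ s hM
  intro N hN hNM
  have hsplit : ∑ n ∈ Finset.Ioc (M - (N + 1)) M, φ n =
      φ (M - N) + ∑ n ∈ Finset.Ioc (M - N) M, φ n := by
    rw [← Finset.sum_Ioc_consecutive φ (show M - (N + 1) ≤ M - N by omega)
      (show M - N ≤ M by omega)]
    congr 1
    rw [show M - N = M - (N + 1) + 1 by omega]
    simp
  have hbound : ∑ n ∈ Finset.Ioc (M - N) M, φ n ≤ N * φ (M - N) := by
    calc _ ≤ ∑ n ∈ Finset.Ioc (M - N) M, φ (M - N) := by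
          refine Finset.sum_le_sum fun n hn => hanti _ _ (by omega) ?_
          rw [Finset.mem_Ioc] at hn; omega
      _ = _ := by
          simp; left; rw [Nat.cast_sub hNM.le]; ring
  have hNpos : (0 : ℝ) < N := by exact_mod_cast hN
  simp only [hsplit]
  push_cast
  rw [one_div_mul_eq_div, one_div_mul_eq_div, div_le_div_iff₀ hNpos (by positivity)]
  nlinarith

theorem sum_signed_inverse_differences {e : ℝ} (he : e * e = 1) {r K : ℕ} (hr : 1 ≤ r)
    (hK : r ≤ K + 1) :
    ∑ n ∈ Finset.Icc 1 K, e ^ n / ((n : ℝ) - r) =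
      e ^ r * (signedHarmonic e (K - r) - signedHarmonic e (r - 1)) := by
  obtain ⟨q, rfl⟩ : ∃ q, r = q + 1 := ⟨r - 1, by omega⟩
  have hqK : q ≤ K := by omega
  induction K, hqK using Nat.le_induction with
  | base =>
    have hI : Finset.Icc 1 q = Finset.Ico 1 (q + 1) := by ext; simp
    rw [Nat.add_sub_cancel, Nat.sub_eq_zero_of_le (by omega : q ≤ q + 1)]
    simp only [signedHarmonic]
    rw [hI, ← sum_Ico_one_reflect]
    simp only [zero_lt_one, Finset.Icc_eq_empty_of_lt, Finset.sum_empty, zero_sub]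
    rw [mul_neg, Finset.mul_sum, ← Finset.sum_neg_distrib]
    refine Finset.sum_congr rfl fun j hj => ?_
    rw [Finset.mem_Ico] at hj
    rw [Nat.cast_sub (by omega)]
    have h1 : e ^ (q + 1) = e ^ (q + 1 - j) * e ^ j := by rw [← pow_add]; congr 1; omega
    have h2 : e ^ j * e ^ j = 1 := by rw [← mul_pow, he, one_pow]
    rw [h1, mul_div_assoc', mul_assoc, h2, mul_one, ← div_neg]
    congr 1
    ring
  | succ K hK' ih =>
    rw [Finset.sum_Icc_succ_top (by omega), ih (by omega)]
    rcases hK'.eq_or_lt with rfl | hlt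
    · simp [signedHarmonic]
    · obtain ⟨j, rfl⟩ : ∃ j, K = q + 1 + j := ⟨K - (q + 1), by omega⟩
      rw [show q + 1 + j + 1 - (q + 1) = j + 1 by omega,
        show q + 1 + j - (q + 1) = j by omega]
      have : signedHarmonic e (j + 1) = signedHarmonic e j + e ^ (j + 1) / ((j + 1 : ℕ) : ℝ) :=
        Finset.sum_Icc_succ_top (by omega) _
      rw [this]
      push_cast
      rw [show (q : ℝ) + 1 + j + 1 - (q + 1) = j + 1 by ring,
        show q + 1 + j + 1 = (q + 1) + (j + 1) by ring, pow_add]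
      ring

/-- The coefficient of `x ^ k` in `1 / ((l - x) (m - t x) (n - x))`. -/
noncomputable def tripleCoeff (t : ℝ) (k l m n : ℕ) : ℝ :=
  PowerSeries.coeff k (poleSeries 1 l * (poleSeries t m * poleSeries 1 n))

theorem tripleCoeff_two_add (k l : ℕ) {m n : ℕ} (hm : m ≠ 0) (hn : n ≠ 0) :
    tripleCoeff 2 k l (m + n) m + tripleCoeff 2 k l (m + n) n = tripleCoeff 1 k l m n := by
  simp only [tripleCoeff]
  rw [poleSeries_mul_eq_two hm hn, ← map_add]
  congr 1
  ring

theorem tripleCoeff_partial_fractions (k : ℕ) {m n N : ℕ} (hn : n ≠ 0) (hN : N ≠ 0) :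
    tripleCoeff 1 k (N + n) m n =
      1 / (N : ℝ) * (pairCoeff k m n - pairCoeff k m (N + n)) := by
  have hN' : (N : ℝ) ≠ 0 := by exact_mod_cast hN
  have h := congrArg (fun p => PowerSeries.coeff k (poleSeries 1 m * p))
    (poleSeries_sub hn (show N + n ≠ 0 by omega))
  simp only [mul_sub, map_sub] at h
  have e : poleSeries 1 m * (PowerSeries.C (((N + n : ℕ) : ℝ) - n) *
      (poleSeries 1 n * poleSeries 1 (N + n))) =
      PowerSeries.C (N : ℝ) * (poleSeries 1 (N + n) * (poleSeries 1 m * poleSeries 1 n)) := by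
    push_cast
    rw [add_sub_cancel_right]
    ring
  rw [← map_sub, e, PowerSeries.coeff_C_mul] at h
  simp only [tripleCoeff, pairCoeff]
  rw [← h]
  field_simp

theorem two_mul_sum_tripleCoeff (k l n : ℕ) :
    2 * ∑ m ∈ Finset.Ico 1 n, tripleCoeff 2 k l n m =
      ∑ m ∈ Finset.Ico 1 n, tripleCoeff 1 k l m (n - m) := by
  rw [two_mul]
  nth_rewrite 2 [← sum_Ico_one_reflect]
  rw [← Finset.sum_add_distrib]
  refine Finset.sum_congr rfl fun m hm => ?_
  rw [Finset.mem_Ico] at hm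
  rw [← tripleCoeff_two_add k l (by omega : m ≠ 0) (by omega : n - m ≠ 0),
    Nat.add_sub_cancel' hm.2.le]

theorem sum_tripleCoeff_one_eq (k M : ℕ) :
    ∑ n₁ ∈ Finset.Icc 1 M, ∑ n₂ ∈ Finset.Ico 1 n₁, ∑ m ∈ Finset.Ico 1 n₂,
      (-1 : ℝ) ^ (n₁ + n₂) * tripleCoeff 1 k n₁ m (n₂ - m) =
    ∑ N ∈ Finset.Icc 1 M, ∑ m ∈ Finset.Ico 1 N, ∑ n ∈ Finset.Icc 1 (M - N),
      (-1 : ℝ) ^ (N + m) * (1 / (N : ℝ)) * (pairCoeff k m n - pairCoeff k m (N + n)) := by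
  simp only [Finset.sum_sigma']
  refine Finset.sum_bij'
    (fun x _ => ⟨x.1 + x.2.2 - x.2.1, x.2.2, x.2.1 - x.2.2⟩)
    (fun y _ => ⟨y.1 + y.2.2, y.2.1 + y.2.2, y.2.1⟩) ?_ ?_ ?_ ?_ ?_
  · rintro ⟨a, b, m⟩ h
    simp only [Finset.mem_sigma, Finset.mem_Icc, Finset.mem_Ico] at h ⊢
    omega
  · rintro ⟨a, b, m⟩ h
    simp only [Finset.mem_sigma, Finset.mem_Icc, Finset.mem_Ico] at h ⊢
    omega
  · rintro ⟨a, b, m⟩ h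
    simp only [Finset.mem_sigma, Finset.mem_Icc, Finset.mem_Ico] at h
    dsimp only
    rw [show a + m - b + (b - m) = a by omega, show m + (b - m) = b by omega]
  · rintro ⟨a, b, m⟩ h
    simp only [Finset.mem_sigma, Finset.mem_Icc, Finset.mem_Ico] at h
    dsimp only
    rw [show a + m + b - (b + m) = a by omega, show b + m - b = m by omega]
  · rintro ⟨a, b, m⟩ h
    simp only [Finset.mem_sigma, Finset.mem_Icc, Finset.mem_Ico] at h
    obtain ⟨n, rfl⟩ : ∃ n, b = m + n := ⟨b - m, by omega⟩
    obtain ⟨N, rfl⟩ : ∃ N, a = N + n := ⟨a - n, by omega⟩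
    simp only [Nat.add_sub_cancel_left, show N + n + m - (m + n) = N by omega]
    rw [tripleCoeff_partial_fractions k (by omega : n ≠ 0) (by omega : N ≠ 0), show N + n + (m + n) = N + m + 2 * n by ring, pow_add _ _ (2 * n),
      pow_mul]
    simp
    ring

/-- The truncated weighted sum as a main term minus a tail. -/
theorem two_mul_sum_tripleCoeff_two_eq (k M : ℕ) :
    2 * ∑ n₁ ∈ Finset.Icc 1 M, ∑ n₂ ∈ Finset.Ico 1 n₁, ∑ m ∈ Finset.Ico 1 n₂,
      (-1 : ℝ) ^ (n₁ + n₂) * tripleCoeff 2 k n₁ n₂ m =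
    ∑ N ∈ Finset.Icc 1 M, ∑ m ∈ Finset.Ico 1 N,
      (-1 : ℝ) ^ (N + m) * (1 / (N : ℝ)) * ∑ n ∈ Finset.Icc 1 N, pairCoeff k m n
    - ∑ N ∈ Finset.Icc 1 M, ∑ m ∈ Finset.Ico 1 N,
      (-1 : ℝ) ^ (N + m) * (1 / (N : ℝ)) * ∑ n ∈ Finset.Ioc (M - N) M, pairCoeff k m n := by
  calc _ = _ := by
        rw [Finset.mul_sum]
        refine Finset.sum_congr rfl fun n₁ _ => ?_
        rw [Finset.mul_sum]
        refine Finset.sum_congr rfl fun n₂ _ => ?_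
        rw [← Finset.mul_sum, mul_left_comm, two_mul_sum_tripleCoeff, Finset.mul_sum]
    _ = _ := sum_tripleCoeff_one_eq k M
    _ = _ := by
        rw [← Finset.sum_sub_distrib]
        refine Finset.sum_congr rfl fun N hN => ?_
        rw [← Finset.sum_sub_distrib]
        refine Finset.sum_congr rfl fun m _ => ?_
        rw [← Finset.mul_sum, sum_sub_shift _ (Finset.mem_Icc.mp hN).2, mul_sub]

theorem abs_sum_pairCoeff_tail_le (k : ℕ) {M : ℕ} (hM : 1 ≤ M) :
    |∑ N ∈ Finset.Icc 1 M, ∑ m ∈ Finset.Ico 1 N,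
      (-1 : ℝ) ^ (N + m) * (1 / (N : ℝ)) * ∑ n ∈ Finset.Ioc (M - N) M, pairCoeff k m n| ≤
    ((k : ℝ) + 1) * (signedHarmonic 1 M ^ 2 / M) := by
  rw [Finset.sum_comm' (t' := Finset.Icc 1 M) (s' := fun m => Finset.Ioc m M)
    (by intro x y; simp only [Finset.mem_Icc, Finset.mem_Ico, Finset.mem_Ioc]; omega)]
  calc _ ≤ ∑ m ∈ Finset.Icc 1 M, ((k : ℝ) + 1) * (1 / (m : ℝ)) * (signedHarmonic 1 M / M) := by
        refine (Finset.abs_sum_le_sum_abs _ _).trans (Finset.sum_le_sum fun m hm => ?_)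
        rw [Finset.mem_Icc] at hm
        have h := abs_alternating_sum_tail_average_le (φ := pairCoeff k m)
          (pairCoeff_nonneg k m) (fun n n' => pairCoeff_anti k m) m hM
        have e : ∑ N ∈ Finset.Ioc m M, (-1 : ℝ) ^ (N + m) * (1 / (N : ℝ)) *
            ∑ n ∈ Finset.Ioc (M - N) M, pairCoeff k m n =
            (-1) ^ m * ∑ N ∈ Finset.Ioc m M, (-1 : ℝ) ^ N *
              (1 / (N : ℝ) * ∑ n ∈ Finset.Ioc (M - N) M, pairCoeff k m n) := by
          rw [Finset.mul_sum]
          refine Finset.sum_congr rfl fun N _ => ?_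
          ring
        rw [e, abs_mul, abs_pow, abs_neg, abs_one, one_pow, one_mul]
        refine h.trans ?_
        have h2 : ∑ n ∈ Finset.Icc 1 M, pairCoeff k m n ≤
            ((k : ℝ) + 1) * (1 / (m : ℝ)) * signedHarmonic 1 M := by
          rw [signedHarmonic, Finset.mul_sum]
          refine Finset.sum_le_sum fun n hn => ?_
          rw [one_pow, mul_assoc]
          exact pairCoeff_le k hm.1 (Finset.mem_Icc.mp hn).1
        calc _ ≤ 1 / (M : ℝ) * (((k : ℝ) + 1) * (1 / (m : ℝ)) * signedHarmonic 1 M) := by gcongr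
          _ = _ := by ring
    _ = _ := by
        rw [← Finset.sum_mul, ← Finset.mul_sum]
        have : ∑ m ∈ Finset.Icc 1 M, 1 / (m : ℝ) = signedHarmonic 1 M := by simp [signedHarmonic]
        rw [this]
        ring

/-- The residue at `r` of the main term. -/
noncomputable def residueSum (r M : ℕ) : ℝ :=
  ∑ N ∈ Finset.Ioc r M,
    (-1 : ℝ) ^ N / N * (signedHarmonic 1 (N - r) - signedHarmonic 1 (r - 1))
  + ∑ N ∈ Finset.Icc r M,
    (-1 : ℝ) ^ N / N * (signedHarmonic (-1) (N - 1 - r) - signedHarmonic (-1) (r - 1))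

theorem sum_sum_pairCoeff_eq (k : ℕ) {N : ℕ} (hN : 1 ≤ N) :
    ∑ m ∈ Finset.Ico 1 N, (-1 : ℝ) ^ m * ∑ n ∈ Finset.Icc 1 N, pairCoeff k m n =
    ∑ m ∈ Finset.Ico 1 N, (-1 : ℝ) ^ m * pairCoeff k m m
    + ∑ r ∈ Finset.Ico 1 N, (-1 : ℝ) ^ r * (1 / (r : ℝ) ^ (k + 1)) *
        (signedHarmonic 1 (N - r) - signedHarmonic 1 (r - 1))
    + ∑ r ∈ Finset.Icc 1 N, (-1 : ℝ) ^ r * (1 / (r : ℝ) ^ (k + 1)) *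
        (signedHarmonic (-1) (N - 1 - r) - signedHarmonic (-1) (r - 1)) := by
  have hsplit : ∀ m ∈ Finset.Ico 1 N, (-1 : ℝ) ^ m * ∑ n ∈ Finset.Icc 1 N, pairCoeff k m n =
      (-1 : ℝ) ^ m * pairCoeff k m m
      + (-1 : ℝ) ^ m * (1 / (m : ℝ) ^ (k + 1)) *
        (signedHarmonic 1 (N - m) - signedHarmonic 1 (m - 1))
      + ∑ n ∈ Finset.Icc 1 N, (1 / (n : ℝ) ^ (k + 1)) * ((-1) ^ m / ((m : ℝ) - n)) := by
    intro m hm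
    rw [Finset.mem_Ico] at hm
    have h := sum_signed_inverse_differences (e := 1) (by norm_num) hm.1
      (show m ≤ N + 1 by omega)
    rw [one_pow, one_mul] at h
    rw [← h, Finset.sum_congr rfl (fun n hn => pairCoeff_partial_fractions k
      (by omega : m ≠ 0) (by rw [Finset.mem_Icc] at hn; omega : n ≠ 0)),
      Finset.sum_add_distrib, mul_add, Finset.sum_ite_eq', if_pos (by simp; omega), add_assoc]
    congr 1
    rw [Finset.mul_sum, Finset.mul_sum, ← Finset.sum_add_distrib]
    refine Finset.sum_congr rfl fun n _ => ?_
    rw [← neg_sub (n : ℝ) m, div_neg]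
    simp only [one_pow]
    ring
  rw [Finset.sum_congr rfl hsplit, Finset.sum_add_distrib, Finset.sum_add_distrib]
  congr 1
  rw [Finset.sum_comm]
  refine Finset.sum_congr rfl fun r hr => ?_
  rw [Finset.mem_Icc] at hr
  have h := sum_signed_inverse_differences (e := -1) (by norm_num) hr.1
    (show r ≤ N - 1 + 1 by omega)
  have hI : Finset.Icc 1 (N - 1) = Finset.Ico 1 N := by ext; simp; omega
  rw [hI] at h
  rw [← Finset.mul_sum, h]
  ring

theorem main_term_eq (k M : ℕ) :
    ∑ N ∈ Finset.Icc 1 M, ∑ m ∈ Finset.Ico 1 N,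
      (-1 : ℝ) ^ (N + m) * (1 / (N : ℝ)) * ∑ n ∈ Finset.Icc 1 N, pairCoeff k m n =
    ∑ N ∈ Finset.Icc 1 M, ∑ m ∈ Finset.Ico 1 N,
      (-1 : ℝ) ^ (N + m) * (1 / (N : ℝ)) * pairCoeff k m m
    + ∑ r ∈ Finset.Icc 1 M, (-1 : ℝ) ^ r * (1 / (r : ℝ) ^ (k + 1)) * residueSum r M := by
  have h1 : ∀ N ∈ Finset.Icc 1 M, ∑ m ∈ Finset.Ico 1 N,
      (-1 : ℝ) ^ (N + m) * (1 / (N : ℝ)) * ∑ n ∈ Finset.Icc 1 N, pairCoeff k m n =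
      ∑ m ∈ Finset.Ico 1 N, (-1 : ℝ) ^ (N + m) * (1 / (N : ℝ)) * pairCoeff k m m
      + ∑ r ∈ Finset.Ico 1 N, (-1 : ℝ) ^ r * (1 / (r : ℝ) ^ (k + 1)) *
        ((-1 : ℝ) ^ N / N * (signedHarmonic 1 (N - r) - signedHarmonic 1 (r - 1)))
      + ∑ r ∈ Finset.Icc 1 N, (-1 : ℝ) ^ r * (1 / (r : ℝ) ^ (k + 1)) *
        ((-1 : ℝ) ^ N / N *
          (signedHarmonic (-1) (N - 1 - r) - signedHarmonic (-1) (r - 1))) := by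
    intro N hN
    have h := congrArg (fun x => (-1 : ℝ) ^ N * (1 / (N : ℝ)) * x)
      (sum_sum_pairCoeff_eq k (Finset.mem_Icc.mp hN).1)
    simp only [mul_add, Finset.mul_sum] at h
    simp only [Finset.mul_sum]
    convert h using 3 <;> (try refine Finset.sum_congr rfl fun _ _ => ?_) <;> ring
  rw [Finset.sum_congr rfl h1, Finset.sum_add_distrib, Finset.sum_add_distrib, add_assoc]
  congr 1
  rw [Finset.sum_comm' (t' := Finset.Icc 1 M) (s' := fun r => Finset.Ioc r M)
      (by intro x y; simp only [Finset.mem_Icc, Finset.mem_Ico, Finset.mem_Ioc]; omega),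
    Finset.sum_comm' (t := fun N => Finset.Icc 1 N) (t' := Finset.Icc 1 M)
      (s' := fun r => Finset.Icc r M)
      (by intro x y; simp only [Finset.mem_Icc]; omega),
    ← Finset.sum_add_distrib]
  refine Finset.sum_congr rfl fun r _ => ?_
  rw [← Finset.mul_sum, ← Finset.mul_sum, ← mul_add, residueSum]

/-- The limiting value of `residueSum r M`, truncated at `M`. -/
noncomputable def residueTarget (r M : ℕ) : ℝ :=
  (∑ n ∈ Finset.Icc r M, (-1 : ℝ) ^ n / n) ^ 2 + ∑ n ∈ Finset.Ioc r M, (-1 : ℝ) ^ n / (n : ℝ) ^ 2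

theorem signedHarmonic_succ (e : ℝ) (n : ℕ) :
    signedHarmonic e (n + 1) = signedHarmonic e n + e ^ (n + 1) / ((n + 1 : ℕ) : ℝ) :=
  Finset.sum_Icc_succ_top (by omega) _

theorem sum_Icc_eq_signedHarmonic_sub (e : ℝ) {r M : ℕ} (hr : 1 ≤ r) (hM : r ≤ M + 1) :
    ∑ n ∈ Finset.Icc r M, e ^ n / (n : ℝ) = signedHarmonic e M - signedHarmonic e (r - 1) := by
  have hI : Finset.Icc r M = Finset.Ioc (r - 1) M := by ext; simp; omega
  have hI' : ∀ L, Finset.Icc 1 L = Finset.Ioc 0 L := fun L => by ext; simp; omega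
  rw [hI, signedHarmonic, signedHarmonic, hI', hI',
    ← Finset.sum_Ioc_consecutive (fun n : ℕ => e ^ n / (n : ℝ)) (Nat.zero_le (r - 1))
      (by omega : r - 1 ≤ M)]
  ring

theorem sum_alternating_mul_signedHarmonic (r M : ℕ) :
    ∑ N ∈ Finset.Ioc r M, (-1 : ℝ) ^ N / N * signedHarmonic (-1) (N - 1 - r) =
    ∑ p ∈ Finset.Ioc r M, (-1 : ℝ) ^ p / p * signedHarmonic 1 p
    - ∑ p ∈ Finset.Ioc r M, (-1 : ℝ) ^ p * (1 / (p : ℝ) *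
        ∑ n ∈ Finset.Ioc (M - p) M, 1 / (n : ℝ)) := by
  have hR : ∑ p ∈ Finset.Ioc r M, (-1 : ℝ) ^ p / p * signedHarmonic 1 p
      - ∑ p ∈ Finset.Ioc r M, (-1 : ℝ) ^ p * (1 / (p : ℝ) *
        ∑ n ∈ Finset.Ioc (M - p) M, 1 / (n : ℝ)) =
      ∑ p ∈ Finset.Ioc r M, ∑ j ∈ Finset.Icc 1 (M - p),
        (-1 : ℝ) ^ p / p * (1 / (j : ℝ) - 1 / ((p + j : ℕ) : ℝ)) := by
    rw [← Finset.sum_sub_distrib]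
    refine Finset.sum_congr rfl fun p hp => ?_
    rw [← Finset.mul_sum, sum_sub_shift (fun n => 1 / (n : ℝ)) (Finset.mem_Ioc.mp hp).2]
    simp only [signedHarmonic, one_pow]
    ring
  rw [hR]
  simp only [signedHarmonic, Finset.mul_sum, Finset.sum_sigma']
  refine Finset.sum_bij' (fun x _ => ⟨x.1 - x.2, x.2⟩) (fun y _ => ⟨y.1 + y.2, y.2⟩)
    ?_ ?_ ?_ ?_ ?_
  · rintro ⟨a, j⟩ h
    simp only [Finset.mem_sigma, Finset.mem_Icc, Finset.mem_Ioc] at h ⊢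
    omega
  · rintro ⟨a, j⟩ h
    simp only [Finset.mem_sigma, Finset.mem_Icc, Finset.mem_Ioc] at h ⊢
    omega
  · rintro ⟨a, j⟩ h
    simp only [Finset.mem_sigma, Finset.mem_Icc, Finset.mem_Ioc] at h
    dsimp only
    rw [show a - j + j = a by omega]
  · rintro ⟨a, j⟩ h
    dsimp only
    rw [show a + j - j = a by omega]
  · rintro ⟨a, j⟩ h
    simp only [Finset.mem_sigma, Finset.mem_Icc, Finset.mem_Ioc] at h
    obtain ⟨p, rfl⟩ : ∃ p, a = p + j := ⟨a - j, by omega⟩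
    have hj : (0 : ℝ) < j := by exact_mod_cast h.2.1
    have hp : (0 : ℝ) < p := by exact_mod_cast (by omega : 0 < p)
    have hs : (-1 : ℝ) ^ j * (-1) ^ j = 1 := by simp [← mul_pow]
    dsimp only
    rw [Nat.add_sub_cancel, div_mul_div_comm, pow_add, mul_assoc, hs]
    push_cast
    field_simp
    ring

theorem sum_mul_signedHarmonic_eq_triangle {r : ℕ} (hr : 1 ≤ r) (M : ℕ) :
    ∑ p ∈ Finset.Ioc r M, (-1 : ℝ) ^ p / p *
      (∑ N ∈ Finset.Ico r p, 1 / (N : ℝ) + signedHarmonic 1 (p - r)) =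
    ∑ N ∈ Finset.Icc r M, (-1 : ℝ) ^ N / N * signedHarmonic (-1) (M - N) := by
  have hL : ∀ p ∈ Finset.Ioc r M, (-1 : ℝ) ^ p / p *
      (∑ N ∈ Finset.Ico r p, 1 / (N : ℝ) + signedHarmonic 1 (p - r)) =
      ∑ N ∈ Finset.Ico r p, (-1 : ℝ) ^ p / (N * ((p - N : ℕ) : ℝ)) := by
    intro p hp
    have hrefl : signedHarmonic 1 (p - r) = ∑ N ∈ Finset.Ico r p, 1 / ((p - N : ℕ) : ℝ) := by
      refine Finset.sum_nbij' (fun j => p - j) (fun j => p - j) ?_ ?_ ?_ ?_ ?_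
      · intro j hj; simp only [Finset.mem_Icc, Finset.mem_Ico] at *; omega
      · intro j hj; simp only [Finset.mem_Icc, Finset.mem_Ico] at *; omega
      · intro j hj; simp only [Finset.mem_Icc] at *; omega
      · intro j hj; simp only [Finset.mem_Ico] at *; omega
      · intro j hj
        simp only [Finset.mem_Icc] at hj
        rw [show p - (p - j) = j by omega, one_pow]
    rw [hrefl, ← Finset.sum_add_distrib, Finset.mul_sum]
    refine Finset.sum_congr rfl fun N hN => ?_
    rw [Finset.mem_Ico] at hN
    obtain ⟨j, rfl⟩ : ∃ j, p = N + j := ⟨p - N, by omega⟩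
    have hj : (0 : ℝ) < j := by exact_mod_cast (by omega : 0 < j)
    have hp : (0 : ℝ) < N := by exact_mod_cast (by omega : 0 < N)
    rw [Nat.add_sub_cancel_left]
    push_cast
    field_simp
    ring
  rw [Finset.sum_congr rfl hL]
  simp only [signedHarmonic, Finset.mul_sum, Finset.sum_sigma']
  refine Finset.sum_bij' (fun x _ => ⟨x.2, x.1 - x.2⟩) (fun y _ => ⟨y.1 + y.2, y.1⟩)
    ?_ ?_ ?_ ?_ ?_
  · rintro ⟨a, j⟩ h
    simp only [Finset.mem_sigma, Finset.mem_Icc, Finset.mem_Ioc, Finset.mem_Ico] at h ⊢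
    omega
  · rintro ⟨a, j⟩ h
    simp only [Finset.mem_sigma, Finset.mem_Icc, Finset.mem_Ioc, Finset.mem_Ico] at h ⊢
    omega
  · rintro ⟨a, j⟩ h
    simp only [Finset.mem_sigma, Finset.mem_Ico] at h
    dsimp only
    rw [show j + (a - j) = a by omega]
  · rintro ⟨a, j⟩ h
    dsimp only
    rw [show a + j - a = j by omega]
  · rintro ⟨a, j⟩ h
    simp only [Finset.mem_sigma, Finset.mem_Ico] at h
    dsimp only
    rw [div_mul_div_comm, ← pow_add, show j + (a - j) = a by omega]

/-- Exact finite form of the residue identity, with two error terms. -/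
theorem residueSum_eq {r M : ℕ} (hr : 1 ≤ r) (hM : r ≤ M) :
    residueSum r M = residueTarget r M
      - ∑ p ∈ Finset.Ioc r M, (-1 : ℝ) ^ p * (1 / (p : ℝ) *
          ∑ n ∈ Finset.Ioc (M - p) M, 1 / (n : ℝ))
      - ∑ N ∈ Finset.Icc r M, (-1 : ℝ) ^ N / N *
          ∑ j ∈ Finset.Ioc (M - N) M, (-1 : ℝ) ^ j * (1 / (j : ℝ)) := by
  have hI : Finset.Icc r M = insert r (Finset.Ioc r M) := by ext; simp; omega
  have hT := sum_Icc_eq_signedHarmonic_sub (-1) hr (show r ≤ M + 1 by omega)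
  have h1 := sum_alternating_mul_signedHarmonic r M
  have h2 := sum_mul_signedHarmonic_eq_triangle hr M
  have h3 : ∑ N ∈ Finset.Icc r M, (-1 : ℝ) ^ N / N *
      (signedHarmonic (-1) (N - 1 - r) - signedHarmonic (-1) (r - 1)) =
      ∑ N ∈ Finset.Ioc r M, (-1 : ℝ) ^ N / N * signedHarmonic (-1) (N - 1 - r)
      - (∑ n ∈ Finset.Icc r M, (-1 : ℝ) ^ n / n) * signedHarmonic (-1) (r - 1) := by
    simp only [mul_sub, Finset.sum_sub_distrib, ← Finset.sum_mul]
    congr 1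
    rw [hI, Finset.sum_insert (by simp)]
    have : signedHarmonic (-1) (r - 1 - r) = 0 := by
      rw [show r - 1 - r = 0 by omega]; simp [signedHarmonic]
    rw [this]
    ring
  have h4 : ∑ N ∈ Finset.Icc r M, (-1 : ℝ) ^ N / N *
      ∑ j ∈ Finset.Ioc (M - N) M, (-1 : ℝ) ^ j * (1 / (j : ℝ)) =
      (∑ n ∈ Finset.Icc r M, (-1 : ℝ) ^ n / n) * signedHarmonic (-1) M
      - ∑ N ∈ Finset.Icc r M, (-1 : ℝ) ^ N / N * signedHarmonic (-1) (M - N) := by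
    rw [Finset.sum_mul, ← Finset.sum_sub_distrib]
    refine Finset.sum_congr rfl fun N hN => ?_
    have := sum_Icc_eq_signedHarmonic_sub (-1) (show 1 ≤ M - N + 1 by omega)
      (show M - N + 1 ≤ M + 1 by omega)
    rw [Nat.add_sub_cancel] at this
    rw [← mul_sub, ← this]
    congr 1
    have hI' : Finset.Icc (M - N + 1) M = Finset.Ioc (M - N) M := by ext; simp
    rw [hI']
    exact Finset.sum_congr rfl fun j _ => by ring
  have h5 : ∑ N ∈ Finset.Ioc r M,
      (-1 : ℝ) ^ N / N * (signedHarmonic 1 (N - r) - signedHarmonic 1 (r - 1))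
      + ∑ p ∈ Finset.Ioc r M, (-1 : ℝ) ^ p / p * signedHarmonic 1 p =
      ∑ p ∈ Finset.Ioc r M, (-1 : ℝ) ^ p / p *
        (∑ N ∈ Finset.Ico r p, 1 / (N : ℝ) + signedHarmonic 1 (p - r))
      + ∑ n ∈ Finset.Ioc r M, (-1 : ℝ) ^ n / (n : ℝ) ^ 2 := by
    rw [← Finset.sum_add_distrib, ← Finset.sum_add_distrib]
    refine Finset.sum_congr rfl fun p hp => ?_
    rw [Finset.mem_Ioc] at hp
    obtain ⟨q, rfl⟩ : ∃ q, p = q + 1 := ⟨p - 1, by omega⟩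
    have h6 := sum_Icc_eq_signedHarmonic_sub 1 hr (show r ≤ q + 1 by omega)
    have hI' : Finset.Icc r q = Finset.Ico r (q + 1) := by ext; simp
    rw [hI'] at h6
    simp only [one_pow] at h6
    rw [h6, signedHarmonic_succ 1 q, one_pow]
    ring
  rw [residueSum, residueTarget, h3, h4, h1]
  rw [hT] at *
  linear_combination h5 + h2

theorem signedHarmonic_one_eq (M : ℕ) :
    signedHarmonic 1 M = ∑ n ∈ Finset.Icc 1 M, 1 / (n : ℝ) := by
  simp [signedHarmonic]

theorem signedHarmonic_one_nonneg (M : ℕ) : 0 ≤ signedHarmonic 1 M := by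
  rw [signedHarmonic_one_eq]; positivity

theorem abs_residueSum_sub_le {r M : ℕ} (hr : 1 ≤ r) (hM : r ≤ M) :
    |residueSum r M - residueTarget r M| ≤ 3 * (signedHarmonic 1 M / M) := by
  have hMpos : (0 : ℝ) < M := by exact_mod_cast (by omega : 0 < M)
  have h1 := abs_alternating_sum_tail_average_le (φ := fun n => 1 / (n : ℝ))
    (fun n => by positivity) (fun n n' hn h => by
      have : (0 : ℝ) < n := by exact_mod_cast hn
      gcongr) r (show 1 ≤ M by omega)
  rw [← signedHarmonic_one_eq] at h1
  have h2 : |∑ N ∈ Finset.Icc r M, (-1 : ℝ) ^ N / N *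
      ∑ j ∈ Finset.Ioc (M - N) M, (-1 : ℝ) ^ j * (1 / (j : ℝ))| ≤
      2 * (signedHarmonic 1 M / M) := by
    calc _ ≤ ∑ N ∈ Finset.Icc r M, 1 / (N : ℝ) * (1 / ((M - N + 1 : ℕ) : ℝ)) := by
          refine (Finset.abs_sum_le_sum_abs _ _).trans (Finset.sum_le_sum fun N _ => ?_)
          rw [abs_mul, abs_div, abs_pow, abs_neg, abs_one, one_pow, Nat.abs_cast]
          gcongr
          refine abs_alternating_sum_le_of_anti (d := fun j => 1 / (j : ℝ))
            (fun n _ => by positivity) (fun n hn => ?_) _ _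
          have : (0 : ℝ) < n := by exact_mod_cast hn
          push_cast
          gcongr
          linarith
      _ ≤ ∑ N ∈ Finset.Icc 1 M, 1 / (N : ℝ) * (1 / ((M - N + 1 : ℕ) : ℝ)) := by
          refine Finset.sum_le_sum_of_subset_of_nonneg (Finset.Icc_subset_Icc_left hr) ?_
          intros
          positivity
      _ ≤ ∑ N ∈ Finset.Icc 1 M, (1 / (N : ℝ) + 1 / ((M + 1 - N : ℕ) : ℝ)) * (1 / M) := by
          refine Finset.sum_le_sum fun N hN => ?_
          rw [Finset.mem_Icc] at hN
          rw [show M - N + 1 = M + 1 - N by omega]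
          have hj : (0 : ℝ) < ((M + 1 - N : ℕ) : ℝ) := by exact_mod_cast (by omega : 0 < M + 1 - N)
          have hN0 : (0 : ℝ) < N := by exact_mod_cast hN.1
          have hs : ((M + 1 - N : ℕ) : ℝ) + N = M + 1 := by
            exact_mod_cast (by omega : M + 1 - N + N = M + 1)
          rw [div_add_div _ _ hN0.ne' hj.ne', div_mul_div_comm, div_mul_div_comm,
            div_le_div_iff₀ (by positivity) (by positivity)]
          nlinarith [mul_pos hN0 hj]
      _ = _ := by
          rw [← Finset.sum_mul, Finset.sum_add_distrib]
          have hI : Finset.Icc 1 M = Finset.Ico 1 (M + 1) := by ext; simp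
          have := sum_Ico_one_reflect (fun n => 1 / (n : ℝ)) (M + 1)
          rw [signedHarmonic_one_eq, hI, this]
          ring
  rw [residueSum_eq hr hM]
  rw [abs_le] at *
  rw [one_div_mul_eq_div] at h1
  constructor <;> linarith [h1.1, h1.2, h2.1, h2.2]

/-- The truncated right-hand side, regrouped by its innermost index. -/
theorem sum_residueTarget_eq (k M : ℕ) :
    ∑ r ∈ Finset.Icc 1 M, (-1 : ℝ) ^ r * (1 / (r : ℝ) ^ (k + 1)) * residueTarget r M =
    2 * ∑ n₁ ∈ Finset.Icc 1 M, ∑ n₂ ∈ Finset.Ico 1 n₁, ∑ n₃ ∈ Finset.Ico 1 n₂,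
      (-1 : ℝ) ^ n₁ * (-1) ^ n₂ * (-1) ^ n₃ /
        ((n₁ : ℝ) ^ 1 * (n₂ : ℝ) ^ 1 * (n₃ : ℝ) ^ (k + 1))
    + 2 * ∑ n₁ ∈ Finset.Icc 1 M, ∑ n₂ ∈ Finset.Ico 1 n₁,
      (-1 : ℝ) ^ n₁ * 1 ^ n₂ / ((n₁ : ℝ) ^ 1 * (n₂ : ℝ) ^ (k + 2))
    + ∑ n₁ ∈ Finset.Icc 1 M, ∑ n₂ ∈ Finset.Ico 1 n₁,
      (-1 : ℝ) ^ n₁ * (-1) ^ n₂ / ((n₁ : ℝ) ^ 2 * (n₂ : ℝ) ^ (k + 1))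
    + ∑ n₁ ∈ Finset.Icc 1 M, ∑ n₂ ∈ Finset.Ico 1 n₁,
      (1 : ℝ) ^ n₁ * (-1) ^ n₂ / ((n₁ : ℝ) ^ 2 * (n₂ : ℝ) ^ (k + 1))
    + ∑ n ∈ Finset.Icc 1 M, (-1 : ℝ) ^ n / (n : ℝ) ^ (k + 3) := by
  induction M with
  | zero => simp
  | succ M ih =>
    have hI : Finset.Ico 1 (M + 1) = Finset.Icc 1 M := by ext; simp
    have hsq : ∀ n : ℕ, (-1 : ℝ) ^ n * (-1) ^ n = 1 := fun n => by simp [← mul_pow]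
    have hnew : residueTarget (M + 1) (M + 1) = 1 / ((M : ℝ) + 1) ^ 2 := by
      simp only [residueTarget, Finset.Icc_self, Finset.sum_singleton, Finset.Ioc_self,
        Finset.sum_empty, add_zero, div_pow, ← pow_mul, mul_comm _ 2]
      simp [pow_mul]
    have hstep : ∀ r ∈ Finset.Icc 1 M, residueTarget r (M + 1) = residueTarget r M
        + 2 * ((-1 : ℝ) ^ (M + 1) / ((M : ℝ) + 1)) * ∑ n ∈ Finset.Icc r M, (-1 : ℝ) ^ n / n
        + (1 + (-1 : ℝ) ^ (M + 1)) / ((M : ℝ) + 1) ^ 2 := by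
      intro r hr
      rw [Finset.mem_Icc] at hr
      rw [residueTarget, residueTarget, Finset.sum_Icc_succ_top (by omega),
        Finset.sum_Ioc_succ_top (by omega)]
      push_cast
      generalize (M : ℝ) + 1 = z
      linear_combination hsq (M + 1) / z ^ 2
    have hswap : ∑ r ∈ Finset.Icc 1 M, (-1 : ℝ) ^ r * (1 / (r : ℝ) ^ (k + 1)) *
        ∑ n ∈ Finset.Icc r M, (-1 : ℝ) ^ n / n =
        ∑ n₂ ∈ Finset.Icc 1 M, ∑ n₃ ∈ Finset.Ico 1 n₂,
          (-1 : ℝ) ^ n₂ * (-1) ^ n₃ / ((n₂ : ℝ) ^ 1 * (n₃ : ℝ) ^ (k + 1))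
        + ∑ n ∈ Finset.Icc 1 M, 1 / (n : ℝ) ^ (k + 2) := by
      simp only [Finset.mul_sum]
      rw [Finset.sum_comm' (t' := Finset.Icc 1 M) (s' := fun n => Finset.Icc 1 n)
        (by intro x y; simp only [Finset.mem_Icc]; omega), ← Finset.sum_add_distrib]
      refine Finset.sum_congr rfl fun n hn => ?_
      rw [Finset.mem_Icc] at hn
      have hI' : Finset.Icc 1 n = insert n (Finset.Ico 1 n) := by ext; simp; omega
      rw [hI', Finset.sum_insert (by simp), add_comm]
      congr 1
      · refine Finset.sum_congr rfl fun r _ => ?_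
        rw [pow_one]
        ring
      · rw [pow_succ _ (k + 1)]
        have hn0 : (n : ℝ) ≠ 0 := by exact_mod_cast (by omega : n ≠ 0)
        field_simp
        rw [← pow_mul, mul_comm, pow_mul]
        simp
    rw [Finset.sum_Icc_succ_top (by omega), hnew,
      Finset.sum_congr rfl fun r hr => by rw [hstep r hr]]
    simp only [mul_add, Finset.sum_add_distrib]
    rw [ih]
    simp only [Finset.sum_Icc_succ_top (show 1 ≤ M + 1 by omega), hI]
    have e1 : ∑ r ∈ Finset.Icc 1 M, (-1 : ℝ) ^ r * (1 / (r : ℝ) ^ (k + 1)) *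
        (2 * ((-1 : ℝ) ^ (M + 1) / ((M : ℝ) + 1)) * ∑ n ∈ Finset.Icc r M, (-1 : ℝ) ^ n / n) =
        2 * ((-1 : ℝ) ^ (M + 1) / ((M : ℝ) + 1)) *
          ∑ n₂ ∈ Finset.Icc 1 M, ∑ n₃ ∈ Finset.Ico 1 n₂,
            (-1 : ℝ) ^ n₂ * (-1) ^ n₃ / ((n₂ : ℝ) ^ 1 * (n₃ : ℝ) ^ (k + 1))
        + 2 * ((-1 : ℝ) ^ (M + 1) / ((M : ℝ) + 1)) *
          ∑ n ∈ Finset.Icc 1 M, 1 / (n : ℝ) ^ (k + 2) := by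
      rw [← mul_add, ← hswap, Finset.mul_sum]
      exact Finset.sum_congr rfl fun r _ => by ring
    rw [e1]
    have e2 : ∑ n₂ ∈ Finset.Icc 1 M, ∑ n₃ ∈ Finset.Ico 1 n₂,
        (-1 : ℝ) ^ (M + 1) * (-1) ^ n₂ * (-1) ^ n₃ /
          (((M + 1 : ℕ) : ℝ) ^ 1 * (n₂ : ℝ) ^ 1 * (n₃ : ℝ) ^ (k + 1)) =
        (-1 : ℝ) ^ (M + 1) / ((M : ℝ) + 1) *
          ∑ n₂ ∈ Finset.Icc 1 M, ∑ n₃ ∈ Finset.Ico 1 n₂,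
            (-1 : ℝ) ^ n₂ * (-1) ^ n₃ / ((n₂ : ℝ) ^ 1 * (n₃ : ℝ) ^ (k + 1)) := by
      simp only [Finset.mul_sum]
      refine Finset.sum_congr rfl fun _ _ => Finset.sum_congr rfl fun _ _ => ?_
      rw [div_mul_div_comm]
      push_cast
      ring
    have e3 : ∀ (x y : ℝ) (s t : ℕ), ∑ n ∈ Finset.Icc 1 M,
        x ^ (M + 1) * y ^ n / (((M + 1 : ℕ) : ℝ) ^ s * (n : ℝ) ^ t) =
        x ^ (M + 1) / ((M : ℝ) + 1) ^ s * ∑ n ∈ Finset.Icc 1 M, y ^ n / (n : ℝ) ^ t := by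
      intro x y s t
      rw [Finset.mul_sum]
      refine Finset.sum_congr rfl fun _ _ => ?_
      rw [div_mul_div_comm]
      push_cast
      ring
    have e4 : ∑ r ∈ Finset.Icc 1 M, (-1 : ℝ) ^ r * (1 / (r : ℝ) ^ (k + 1)) *
        ((1 + (-1 : ℝ) ^ (M + 1)) / ((M : ℝ) + 1) ^ 2) =
        ((1 + (-1 : ℝ) ^ (M + 1)) / ((M : ℝ) + 1) ^ 2) *
          ∑ n ∈ Finset.Icc 1 M, (-1 : ℝ) ^ n / (n : ℝ) ^ (k + 1) := by
      rw [Finset.mul_sum]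
      exact Finset.sum_congr rfl fun _ _ => by ring
    rw [e2, e4, e3 (-1) 1 1, e3 (-1) (-1) 2, e3 1 (-1) 2]
    simp only [one_pow]
    push_cast
    generalize (M : ℝ) + 1 = z
    ring

theorem signedHarmonic_one_le {n : ℕ} (hn : 1 ≤ n) :
    signedHarmonic 1 n ≤ 5 * (n : ℝ) ^ (1 / 4 : ℝ) := by
  have h0 : signedHarmonic 1 n = ((harmonic n : ℚ) : ℝ) := by
    rw [harmonic_eq_sum_Icc, signedHarmonic_one_eq]
    push_cast
    simp
  have h1 := harmonic_le_one_add_log n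
  have hn' : (1 : ℝ) ≤ n := by exact_mod_cast hn
  have h2 := Real.log_le_rpow_div (show (0 : ℝ) ≤ n by positivity)
    (show (0 : ℝ) < 1 / 4 by norm_num)
  have h3 := Real.one_le_rpow hn' (show (0 : ℝ) ≤ 1 / 4 by norm_num)
  rw [h0]
  linarith

theorem signedHarmonic_one_sq_le {n : ℕ} (hn : 1 ≤ n) :
    signedHarmonic 1 n ^ 2 ≤ 25 * (n : ℝ) ^ (1 / 2 : ℝ) := by
  have h := pow_le_pow_left₀ (signedHarmonic_one_nonneg n) (signedHarmonic_one_le hn) 2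
  rw [mul_pow, ← Real.rpow_natCast ((n : ℝ) ^ _), ← Real.rpow_mul (by positivity)] at h
  norm_num at h ⊢
  exact h

theorem tendsto_signedHarmonic_sq_div :
    Tendsto (fun n : ℕ => signedHarmonic 1 n ^ 2 / (n : ℝ)) atTop (nhds 0) := by
  have h : Tendsto (fun n : ℕ => 25 * (n : ℝ) ^ (-(1 / 2) : ℝ)) atTop (nhds 0) := by
    simpa using ((tendsto_rpow_neg_atTop (show (0 : ℝ) < 1 / 2 by norm_num)).comp
      tendsto_natCast_atTop_atTop).const_mul 25
  refine squeeze_zero' (Eventually.of_forall fun n => by positivity) ?_ h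
  filter_upwards [eventually_ge_atTop 1] with n hn
  have hn' : (0 : ℝ) < n := by exact_mod_cast hn
  rw [div_le_iff₀ hn', mul_assoc, ← Real.rpow_add_one hn'.ne']
  norm_num
  have := signedHarmonic_one_sq_le hn
  norm_num at this
  exact this

theorem summable_signedHarmonic_sq_div_sq :
    Summable (fun n : ℕ => signedHarmonic 1 n ^ 2 / (n : ℝ) ^ 2) := by
  have h : Summable (fun n : ℕ => 25 * (n : ℝ) ^ (-(3 / 2) : ℝ)) :=
    (Real.summable_nat_rpow.mpr (by norm_num)).mul_left 25
  refine Summable.of_nonneg_of_le (fun n => by positivity) (fun n => ?_) h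
  rcases Nat.eq_zero_or_pos n with rfl | hn
  · simp
  have hn' : (0 : ℝ) < n := by exact_mod_cast hn
  rw [div_le_iff₀ (by positivity), mul_assoc, ← Real.rpow_natCast (n : ℝ), ← Real.rpow_add hn']
  have := signedHarmonic_one_sq_le hn
  norm_num at this ⊢
  exact this

theorem one_le_signedHarmonic_one {n : ℕ} (hn : 1 ≤ n) : 1 ≤ signedHarmonic 1 n := by
  rw [signedHarmonic_one_eq]
  have := Finset.single_le_sum (f := fun k : ℕ => 1 / (k : ℝ)) (fun i _ => by positivity)
    (Finset.mem_Icc.mpr ⟨le_rfl, hn⟩)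
  simpa using this

theorem signedHarmonic_one_mono {m n : ℕ} (h : m ≤ n) :
    signedHarmonic 1 m ≤ signedHarmonic 1 n := by
  rw [signedHarmonic_one_eq, signedHarmonic_one_eq]
  refine Finset.sum_le_sum_of_subset_of_nonneg (Finset.Icc_subset_Icc_right h) ?_
  intros
  positivity

theorem sum_Icc_one_eq_sum_range (f : ℕ → ℝ) (N : ℕ) :
    ∑ n ∈ Finset.Icc 1 N, f n = ∑ i ∈ Finset.range N, f (i + 1) := by
  induction N with
  | zero => simp
  | succ N ih => rw [Finset.sum_Icc_succ_top (by omega), Finset.sum_range_succ, ih]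

theorem exists_tendsto_alternating_sum {f : ℕ → ℝ} (hf : Tendsto f atTop (nhds 0))
    (hs : Summable fun n => |f (n + 1) - f n|) :
    ∃ l, Tendsto (fun N : ℕ => ∑ n ∈ Finset.Icc 1 N, (-1 : ℝ) ^ n * f n) atTop (nhds l) := by
  have hid : ∀ N : ℕ, ∑ n ∈ Finset.Icc 1 N, (-1 : ℝ) ^ n * f n =
      (∑ n ∈ Finset.range N, (-1 : ℝ) ^ (n + 1) * (f (n + 1) - f (n + 2)) - f 1
        + (-1) ^ N * f (N + 1)) / 2 := by
    intro N
    induction N with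
    | zero => simp
    | succ N ih =>
      rw [Finset.sum_Icc_succ_top (by omega), Finset.sum_range_succ, ih]
      ring
  have hsum : Summable fun n => (-1 : ℝ) ^ (n + 1) * (f (n + 1) - f (n + 2)) := by
    refine Summable.of_norm_bounded ((summable_nat_add_iff 1).mpr hs) fun n => ?_
    rw [norm_mul, norm_pow, norm_neg, norm_one, one_pow, one_mul, Real.norm_eq_abs, abs_sub_comm]
  have h0 : Tendsto (fun N : ℕ => (-1 : ℝ) ^ N * f (N + 1)) atTop (nhds 0) := by
    refine squeeze_zero_norm (a := fun N => |f (N + 1)|) (fun N => ?_) ?_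
    · simp
    · simpa using ((tendsto_add_atTop_iff_nat 1).mpr hf).abs
  simp only [hid]
  exact ⟨_, ((hsum.hasSum.tendsto_sum_nat.sub_const _).add h0).div_const 2⟩

theorem abs_sum_le_signedHarmonic_sq {c : ℕ → ℝ}
    (hc : ∀ k, 1 ≤ k → |c k| ≤ signedHarmonic 1 k / k) (n : ℕ) :
    |∑ k ∈ Finset.Ico 1 n, c k| ≤ signedHarmonic 1 n ^ 2 := by
  calc _ ≤ ∑ k ∈ Finset.Ico 1 n, signedHarmonic 1 n * (1 / (k : ℝ)) := by
        refine (Finset.abs_sum_le_sum_abs _ _).trans (Finset.sum_le_sum fun k hk => ?_)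
        rw [Finset.mem_Ico] at hk
        refine (hc k hk.1).trans ?_
        rw [mul_one_div]
        have := signedHarmonic_one_mono hk.2.le
        gcongr
    _ ≤ ∑ k ∈ Finset.Icc 1 n, signedHarmonic 1 n * (1 / (k : ℝ)) := by
        refine Finset.sum_le_sum_of_subset_of_nonneg Finset.Ico_subset_Icc_self fun _ _ _ => ?_
        exact mul_nonneg (signedHarmonic_one_nonneg n) (by positivity)
    _ = _ := by rw [← Finset.mul_sum, ← signedHarmonic_one_eq, sq]

theorem exists_tendsto_sum_of_two_le {c : ℕ → ℝ}
    (hc : ∀ k, 1 ≤ k → |c k| ≤ signedHarmonic 1 k / k) {e : ℝ} (he : |e| = 1) {a : ℕ}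
    (ha : 2 ≤ a) :
    ∃ l, Tendsto (fun N : ℕ => ∑ n ∈ Finset.Icc 1 N,
      e ^ n * ((∑ k ∈ Finset.Ico 1 n, c k) / (n : ℝ) ^ a)) atTop (nhds l) := by
  simp only [sum_Icc_one_eq_sum_range]
  have hs : Summable fun n : ℕ =>
      e ^ (n + 1) * ((∑ k ∈ Finset.Ico 1 (n + 1), c k) / ((n + 1 : ℕ) : ℝ) ^ a) := by
    refine Summable.of_norm_bounded
      ((summable_nat_add_iff 1).mpr summable_signedHarmonic_sq_div_sq) fun n => ?_
    rw [norm_mul, norm_pow, Real.norm_eq_abs, he, one_pow, one_mul, Real.norm_eq_abs, abs_div,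
      abs_pow, Nat.abs_cast]
    have h1 : (1 : ℝ) ≤ ((n + 1 : ℕ) : ℝ) := by exact_mod_cast Nat.le_add_left 1 n
    have h2 := abs_sum_le_signedHarmonic_sq hc (n + 1)
    gcongr
  exact ⟨_, hs.hasSum.tendsto_sum_nat⟩

theorem exists_tendsto_alternating_sum_of_le {c : ℕ → ℝ}
    (hc : ∀ k, 1 ≤ k → |c k| ≤ signedHarmonic 1 k / k) {a : ℕ} (ha : 1 ≤ a) :
    ∃ l, Tendsto (fun N : ℕ => ∑ n ∈ Finset.Icc 1 N,
      (-1 : ℝ) ^ n * ((∑ k ∈ Finset.Ico 1 n, c k) / (n : ℝ) ^ a)) atTop (nhds l) := by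
  rcases ha.eq_or_lt with rfl | ha
  swap
  · exact exists_tendsto_sum_of_two_le hc (by simp) ha
  simp only [pow_one]
  refine exists_tendsto_alternating_sum
    (f := fun n : ℕ => (∑ k ∈ Finset.Ico 1 n, c k) / (n : ℝ)) ?_ ?_
  · refine squeeze_zero_norm (fun n => ?_) tendsto_signedHarmonic_sq_div
    rw [Real.norm_eq_abs, abs_div, Nat.abs_cast]
    have := abs_sum_le_signedHarmonic_sq hc n
    gcongr
  · refine Summable.of_nonneg_of_le (fun n => abs_nonneg _) (fun n => ?_)
      (summable_signedHarmonic_sq_div_sq.mul_left 2)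
    rcases Nat.eq_zero_or_pos n with rfl | hn
    · simp [signedHarmonic]
    have hn' : (0 : ℝ) < n := by exact_mod_cast hn
    have h1 := abs_sum_le_signedHarmonic_sq hc n
    have h2 := hc n hn
    have h3 := one_le_signedHarmonic_one hn
    rw [Finset.sum_Ico_succ_top hn]
    generalize ∑ k ∈ Finset.Ico 1 n, c k = B at *
    have e : (B + c n) / ((n + 1 : ℕ) : ℝ) - B / n =
        c n / ((n : ℝ) + 1) - B / (n * ((n : ℝ) + 1)) := by
      push_cast
      field_simp
      ring
    rw [e]
    have h4 : |c n / ((n : ℝ) + 1)| ≤ signedHarmonic 1 n ^ 2 / (n : ℝ) ^ 2 := by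
      rw [abs_div, abs_of_pos (show (0 : ℝ) < n + 1 by positivity), sq, sq]
      calc _ ≤ signedHarmonic 1 n / n / n := by gcongr; linarith
        _ = signedHarmonic 1 n * 1 / (n * n) := by rw [mul_one, div_div]
        _ ≤ _ := by gcongr
    have h5 : |B / (n * ((n : ℝ) + 1))| ≤ signedHarmonic 1 n ^ 2 / (n : ℝ) ^ 2 := by
      rw [abs_div, abs_of_pos (show (0 : ℝ) < n * (n + 1) by positivity), sq (n : ℝ)]
      gcongr
      linarith
    have h6 := abs_sub (c n / ((n : ℝ) + 1)) (B / (n * ((n : ℝ) + 1)))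
    linarith

theorem abs_pow_div_le {e : ℝ} (he : |e| = 1) {s : ℕ} (hs : 1 ≤ s) {n : ℕ} (hn : 1 ≤ n) :
    |e ^ n / (n : ℝ) ^ s| ≤ 1 / (n : ℝ) := by
  rw [abs_div, abs_pow, he, one_pow, abs_pow, Nat.abs_cast]
  exact one_div_pow_le_one_div hn hs

theorem abs_pow_div_le_harmonic {e : ℝ} (he : |e| = 1) {s : ℕ} (hs : 1 ≤ s) (n : ℕ)
    (hn : 1 ≤ n) : |e ^ n / (n : ℝ) ^ s| ≤ signedHarmonic 1 n / n := by
  refine (abs_pow_div_le he hs hn).trans ?_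
  have := one_le_signedHarmonic_one hn
  gcongr

theorem tendsto_eulerSum3 {a b c : ℕ} (ha : 1 ≤ a) (hb : 1 ≤ b) (hc : 1 ≤ c) {e₂ e₃ : ℝ}
    (h₂ : |e₂| = 1) (h₃ : |e₃| = 1) :
    Tendsto (fun N : ℕ =>
      ∑ n₁ ∈ Finset.Icc 1 N, ∑ n₂ ∈ Finset.Ico 1 n₁, ∑ n₃ ∈ Finset.Ico 1 n₂,
        (-1 : ℝ) ^ n₁ * e₂ ^ n₂ * e₃ ^ n₃ / ((n₁ : ℝ) ^ a * (n₂ : ℝ) ^ b * (n₃ : ℝ) ^ c))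
      atTop (nhds (eulerSum3 a b c (-1) e₂ e₃)) := by
  refine tendsto_nhds_limUnder ?_
  have h := exists_tendsto_alternating_sum_of_le
    (c := fun n => e₂ ^ n / (n : ℝ) ^ b * ∑ k ∈ Finset.Ico 1 n, e₃ ^ k / (k : ℝ) ^ c)
    (fun n hn => ?_) ha
  · obtain ⟨l, hl⟩ := h
    refine ⟨l, hl.congr fun N => Finset.sum_congr rfl fun n₁ _ => ?_⟩
    rw [Finset.sum_div, Finset.mul_sum]
    refine Finset.sum_congr rfl fun n₂ _ => ?_
    rw [Finset.mul_sum, Finset.sum_div, Finset.mul_sum]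
    refine Finset.sum_congr rfl fun n₃ _ => ?_
    rw [div_mul_div_comm, div_div, mul_div_assoc']
    congr 1 <;> ring
  · rw [abs_mul]
    calc _ ≤ 1 / (n : ℝ) * signedHarmonic 1 n := by
          refine mul_le_mul (abs_pow_div_le h₂ hb hn) ?_ (abs_nonneg _) (by positivity)
          rw [signedHarmonic_one_eq]
          refine (Finset.abs_sum_le_sum_abs _ _).trans ((Finset.sum_le_sum fun k hk =>
            abs_pow_div_le h₃ hc (Finset.mem_Ico.mp hk).1).trans ?_)
          exact Finset.sum_le_sum_of_subset_of_nonneg Finset.Ico_subset_Icc_self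
            fun _ _ _ => by positivity
      _ = _ := by ring

theorem tendsto_eulerSum2 {a b : ℕ} (hb : 1 ≤ b) {e₁ e₂ : ℝ}
    (h₁ : 1 ≤ a ∧ e₁ = -1 ∨ 2 ≤ a ∧ |e₁| = 1) (h₂ : |e₂| = 1) :
    Tendsto (fun N : ℕ =>
      ∑ n₁ ∈ Finset.Icc 1 N, ∑ n₂ ∈ Finset.Ico 1 n₁,
        e₁ ^ n₁ * e₂ ^ n₂ / ((n₁ : ℝ) ^ a * (n₂ : ℝ) ^ b))
      atTop (nhds (eulerSum2 a b e₁ e₂)) := by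
  refine tendsto_nhds_limUnder ?_
  have h : ∃ l, Tendsto (fun N : ℕ => ∑ n ∈ Finset.Icc 1 N,
      e₁ ^ n * ((∑ k ∈ Finset.Ico 1 n, e₂ ^ k / (k : ℝ) ^ b) / (n : ℝ) ^ a)) atTop (nhds l) := by
    rcases h₁ with ⟨ha, rfl⟩ | ⟨ha, he⟩
    · exact exists_tendsto_alternating_sum_of_le (abs_pow_div_le_harmonic h₂ hb) ha
    · exact exists_tendsto_sum_of_two_le (abs_pow_div_le_harmonic h₂ hb) he ha
  obtain ⟨l, hl⟩ := h
  refine ⟨l, hl.congr fun N => Finset.sum_congr rfl fun n₁ _ => ?_⟩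
  rw [Finset.sum_div, Finset.mul_sum]
  refine Finset.sum_congr rfl fun n₂ _ => ?_
  rw [div_div, mul_div_assoc']
  congr 1
  ring

theorem tendsto_eulerSum1 {s : ℕ} (hs : 2 ≤ s) {e : ℝ} (he : |e| = 1) :
    Tendsto (fun N : ℕ => ∑ n ∈ Finset.Icc 1 N, e ^ n / (n : ℝ) ^ s)
      atTop (nhds (eulerSum1 s e)) := by
  refine tendsto_nhds_limUnder ?_
  simp only [sum_Icc_one_eq_sum_range]
  have h : Summable fun n : ℕ => e ^ n / (n : ℝ) ^ s := by
    refine Summable.of_norm_bounded (Real.summable_one_div_nat_pow.mpr hs) fun n => ?_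
    rw [Real.norm_eq_abs, abs_div, abs_pow, he, one_pow, abs_pow, Nat.abs_cast]
  exact ⟨_, ((summable_nat_add_iff 1).mpr h).hasSum.tendsto_sum_nat⟩

theorem tripleCoeff_eq_sum (t : ℝ) (k l m n : ℕ) :
    tripleCoeff t k l m n = ∑ a ∈ Finset.Icc 1 (k + 3 - 2), ∑ b ∈ Finset.Icc 1 (k + 3 - a - 1),
      t ^ (b - 1) * (1 / ((l : ℝ) ^ a * (m : ℝ) ^ b * (n : ℝ) ^ (k + 3 - a - b))) := by
  rw [tripleCoeff, PowerSeries.coeff_mul, Finset.Nat.sum_antidiagonal_eq_sum_range_succ_mk,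
    show k + 3 - 2 = k + 1 by omega, sum_Icc_one_eq_sum_range]
  refine Finset.sum_congr rfl fun i hi => ?_
  rw [Finset.mem_range] at hi
  rw [PowerSeries.coeff_mul, Finset.Nat.sum_antidiagonal_eq_sum_range_succ_mk,
    sum_Icc_one_eq_sum_range, Finset.mul_sum, show k + 3 - (i + 1) - 1 = (k - i).succ by omega]
  refine Finset.sum_congr rfl fun j hj => ?_
  rw [Finset.mem_range] at hj
  simp only [poleSeries, PowerSeries.coeff_mk, one_pow]
  rw [show k + 3 - (i + 1) - (j + 1) = k - i - j + 1 by omega, Nat.add_sub_cancel]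
  rw [div_mul_div_comm, div_mul_div_comm, mul_one_div]
  congr 1 <;> ring

theorem sum_sum_sum_rotate (s A : Finset ℕ) (B : ℕ → Finset ℕ) (f : ℕ → ℕ → ℕ → ℝ) :
    ∑ i ∈ s, ∑ a ∈ A, ∑ b ∈ B a, f i a b = ∑ a ∈ A, ∑ b ∈ B a, ∑ i ∈ s, f i a b := by
  rw [Finset.sum_comm]
  exact Finset.sum_congr rfl fun a _ => Finset.sum_comm

theorem weighted_partial_sum_eq (k M : ℕ) :
    ∑ a ∈ Finset.Icc 1 (k + 3 - 2), ∑ b ∈ Finset.Icc 1 (k + 3 - a - 1), (2 : ℝ) ^ (b - 1) *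
      ∑ n₁ ∈ Finset.Icc 1 M, ∑ n₂ ∈ Finset.Ico 1 n₁, ∑ n₃ ∈ Finset.Ico 1 n₂,
        (-1 : ℝ) ^ n₁ * (-1) ^ n₂ * 1 ^ n₃ /
          ((n₁ : ℝ) ^ a * (n₂ : ℝ) ^ b * (n₃ : ℝ) ^ (k + 3 - a - b)) =
    ∑ n₁ ∈ Finset.Icc 1 M, ∑ n₂ ∈ Finset.Ico 1 n₁, ∑ n₃ ∈ Finset.Ico 1 n₂,
      (-1 : ℝ) ^ (n₁ + n₂) * tripleCoeff 2 k n₁ n₂ n₃ := by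
  simp only [tripleCoeff_eq_sum, Finset.mul_sum]
  symm
  rw [Finset.sum_congr rfl fun n₁ _ => (Finset.sum_congr rfl fun n₂ _ =>
    sum_sum_sum_rotate _ _ _ _).trans (sum_sum_sum_rotate _ _ _ _), sum_sum_sum_rotate]
  refine Finset.sum_congr rfl fun a _ => Finset.sum_congr rfl fun b _ =>
    Finset.sum_congr rfl fun n₁ _ => Finset.sum_congr rfl fun n₂ _ =>
    Finset.sum_congr rfl fun n₃ _ => ?_
  rw [one_pow, pow_add]
  ring

/-- The two truncated sides differ by `O((log M)² / M)`. -/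
theorem abs_weighted_partial_sum_sub_le (k : ℕ) {M : ℕ} (hM : 1 ≤ M) :
    |2 * ∑ n₁ ∈ Finset.Icc 1 M, ∑ n₂ ∈ Finset.Ico 1 n₁, ∑ n₃ ∈ Finset.Ico 1 n₂,
      (-1 : ℝ) ^ (n₁ + n₂) * tripleCoeff 2 k n₁ n₂ n₃
    - (∑ N ∈ Finset.Icc 1 M, ∑ m ∈ Finset.Ico 1 N,
        (-1 : ℝ) ^ (N + m) * (1 / (N : ℝ)) * pairCoeff k m m
      + ∑ r ∈ Finset.Icc 1 M, (-1 : ℝ) ^ r * (1 / (r : ℝ) ^ (k + 1)) * residueTarget r M)| ≤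
    ((k : ℝ) + 4) * (signedHarmonic 1 M ^ 2 / M) := by
  have h1 := abs_sum_pairCoeff_tail_le k hM
  have h2 : |∑ r ∈ Finset.Icc 1 M, (-1 : ℝ) ^ r * (1 / (r : ℝ) ^ (k + 1)) *
      (residueSum r M - residueTarget r M)| ≤ 3 * (signedHarmonic 1 M ^ 2 / M) := by
    calc _ ≤ ∑ r ∈ Finset.Icc 1 M, 1 / (r : ℝ) * (3 * (signedHarmonic 1 M / M)) := by
          refine (Finset.abs_sum_le_sum_abs _ _).trans (Finset.sum_le_sum fun r hr => ?_)
          rw [Finset.mem_Icc] at hr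
          rw [abs_mul, mul_one_div]
          exact mul_le_mul (abs_pow_div_le (by simp) (by omega) hr.1)
            (abs_residueSum_sub_le hr.1 hr.2) (abs_nonneg _) (by positivity)
      _ = _ := by rw [← Finset.sum_mul, ← signedHarmonic_one_eq]; ring
  simp only [mul_sub, Finset.sum_sub_distrib] at h2
  rw [two_mul_sum_tripleCoeff_two_eq, main_term_eq]
  rw [abs_le] at *
  constructor <;> linarith [h1.1, h1.2, h2.1, h2.2]

/-- For `w ≥ 4`, with `u = w − 2`, `v = w − 1`:
`2 ∑_{a+b+c=w} 2^{b−1} ζ(ā,b̄,c)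
  = 2 ζ(1̄,1̄,ū) + u ζ(1̄,v̄) + 2 ζ(1̄,v) + ζ(2̄,ū) + ζ(2,ū) + ζ(w̄)`. -/
theorem weighted_sum_triple_barbar_unbar (w : ℕ) (hw : 4 ≤ w) :
    2 * ∑ a ∈ Finset.Icc 1 (w - 2), ∑ b ∈ Finset.Icc 1 (w - a - 1),
        (2 : ℝ) ^ (b - 1) * eulerSum3 a b (w - a - b) (-1) (-1) 1
      = 2 * eulerSum3 1 1 (w - 2) (-1) (-1) (-1)
        + ((w : ℝ) - 2) * eulerSum2 1 (w - 1) (-1) (-1)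
        + 2 * eulerSum2 1 (w - 1) (-1) 1
        + eulerSum2 2 (w - 2) (-1) (-1) + eulerSum2 2 (w - 2) 1 (-1)
        + eulerSum1 w (-1) := by
  obtain ⟨k, rfl⟩ : ∃ k, w = k + 3 := ⟨w - 3, by omega⟩
  have hneg : |(-1 : ℝ)| = 1 := by simp
  have hone : |(1 : ℝ)| = 1 := by simp
  have hL := (tendsto_finsetSum (Finset.Icc 1 (k + 3 - 2)) fun a ha =>
    tendsto_finsetSum (Finset.Icc 1 (k + 3 - a - 1)) fun b hb =>
      (tendsto_eulerSum3 (a := a) (b := b) (c := k + 3 - a - b) (Finset.mem_Icc.mp ha).1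
        (Finset.mem_Icc.mp hb).1 (by rw [Finset.mem_Icc] at ha hb; omega)
        hneg hone).const_mul ((2 : ℝ) ^ (b - 1))).const_mul 2
  have hR := (((((tendsto_eulerSum3 (a := 1) (b := 1) (c := k + 1) le_rfl le_rfl (by omega)
      hneg hneg).const_mul 2).add
    ((tendsto_eulerSum2 (a := 1) (b := k + 2) (by omega) (.inl ⟨le_rfl, rfl⟩) hneg).const_mul
      ((k : ℝ) + 1))).add
    ((tendsto_eulerSum2 (a := 1) (b := k + 2) (by omega) (.inl ⟨le_rfl, rfl⟩) hone).const_mul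
      2)).add
    (tendsto_eulerSum2 (a := 2) (b := k + 1) (by omega) (.inl ⟨by omega, rfl⟩) hneg)).add
    (tendsto_eulerSum2 (a := 2) (b := k + 1) (by omega) (.inr ⟨le_rfl, hone⟩) hneg) |>.add
    (tendsto_eulerSum1 (s := k + 3) (by omega) hneg)
  have hcast : (((k + 3 : ℕ) : ℝ) - 2) = (k : ℝ) + 1 := by push_cast; ring
  rw [hcast]
  refine sub_eq_zero.mp (tendsto_nhds_unique (hL.sub hR) ?_)
  have h0 := tendsto_signedHarmonic_sq_div.const_mul ((k : ℝ) + 4)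
  rw [mul_zero] at h0
  refine squeeze_zero_norm' ?_ h0
  filter_upwards [eventually_ge_atTop 1] with M hM
  refine le_trans (le_of_eq ?_) (abs_weighted_partial_sum_sub_le k hM)
  rw [Real.norm_eq_abs, weighted_partial_sum_eq, sum_residueTarget_eq]
  have hdiag : ∑ N ∈ Finset.Icc 1 M, ∑ m ∈ Finset.Ico 1 N,
      (-1 : ℝ) ^ (N + m) * (1 / (N : ℝ)) * pairCoeff k m m =
      ((k : ℝ) + 1) * ∑ n₁ ∈ Finset.Icc 1 M, ∑ n₂ ∈ Finset.Ico 1 n₁,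
        (-1 : ℝ) ^ n₁ * (-1) ^ n₂ / ((n₁ : ℝ) ^ 1 * (n₂ : ℝ) ^ (k + 2)) := by
    simp only [Finset.mul_sum]
    refine Finset.sum_congr rfl fun N _ => Finset.sum_congr rfl fun m _ => ?_
    rw [pairCoeff_self, mul_one_div, div_mul_div_comm, mul_div_assoc', pow_add, pow_one]
    congr 1
    ring
  rw [hdiag]
  congr 1
  ring
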